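/- (Affine cipher, equivocation bounds.) Let F be a finite field with |F| = N ≥ 3 and probability distribution P_M, and let the key space K ≤ Sym(F) be the group of affine permutations x ↦ a·x + b with a ≠ 0, keys uniform. Set R₄ = max{P_M(n) : n ∈ F}. Then for every message length L: log(2) · R₄^L ≤ H(K | M^L C^L) ≤ log(N(N−1)) · N(N−2) · R₄^L. -/

import Mathlib

open scoped Classical

noncomputable section

/-- Probability of a word under the i.i.d. extension of the symbol distribution `P`. -/
def wordP {M : Type*} (P : M → ℝ) {L : ℕ} (m : Fin L → M) : ℝ := ∏ l, P (m l)

/-- Number of keys in `K` mapping the message `m` (letterwise) to the cryptogram `c`. -/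
def keyCount {M : Type*} (K : Subgroup (Equiv.Perm M)) {L : ℕ} (m c : Fin L → M) : ℕ :=
  Nat.card {k : Equiv.Perm M // k ∈ K ∧ ∀ l, k (m l) = c l}

/-- The key appearance equivocation `H(K | M^L C^L)` for the substitution cipher with
key space `K` (keys uniform), symbol distribution `P` and message length `L`. -/
def kae {M : Type*} [Fintype M] (K : Subgroup (Equiv.Perm M)) (P : M → ℝ) (L : ℕ) : ℝ :=
  ∑ m : Fin L → M, ∑ c : Fin L → M,
    wordP P m * (keyCount K m c : ℝ) / (Nat.card K : ℝ) * Real.log (keyCount K m c)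

/-- The fixed set `F(π)` of a permutation. -/
def fixedSet {M : Type*} [Fintype M] [DecidableEq M] (π : Equiv.Perm M) : Finset M :=
  Finset.univ.filter fun j => π j = j

/-- `P_π`: total probability of the fixed set of `π`. -/
def Pfix {M : Type*} [Fintype M] [DecidableEq M] (P : M → ℝ) (π : Equiv.Perm M) : ℝ :=
  ∑ j ∈ fixedSet π, P j

/-- A key is maximal if it is a non-identity element of `K` whose fixed set is maximal
under inclusion among fixed sets of non-identity elements of `K`. -/
def IsMaximalKey {M : Type*} [Fintype M] [DecidableEq M] (K : Subgroup (Equiv.Perm M))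
    (π : Equiv.Perm M) : Prop :=
  π ∈ K ∧ π ≠ 1 ∧ ∀ τ ∈ K, τ ≠ 1 → fixedSet π ⊆ fixedSet τ → fixedSet τ = fixedSet π

/-- The stabilizer of the message `m` in `K` is nontrivial. -/
def hasNontrivialStab {M : Type*} (K : Subgroup (Equiv.Perm M)) {L : ℕ} (m : Fin L → M) : Prop :=
  ∃ k ∈ K, k ≠ 1 ∧ ∀ l, k (m l) = m l

/-- Total probability of length-`L` messages with a nontrivial stabilizer in `K`. -/
def probNontrivial {M : Type*} [Fintype M] (K : Subgroup (Equiv.Perm M)) (P : M → ℝ)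
    (L : ℕ) : ℝ :=
  ∑ m : Fin L → M, if hasNontrivialStab K m then wordP P m else 0

/-!
Multiplying by a key that takes `m` to `c` identifies the keys taking `m` to `c` with the
stabilizer of `m`, so the equivocation is the mean of `log |Stab m|`. A nontrivial stabilizer has
order between `2` and `|K|`, which places the equivocation between `log 2` and `log |K|` times the
probability that the stabilizer is nontrivial. If a nonidentity key fixes at most one letter, as a
nonidentity affine map does, only the `N` constant messages have a nontrivial stabilizer, and each
has probability at most `R ^ L`; moreover a key is then determined by the images of two letters, so
`|K| ≤ N (N - 1)`.
-/

section Word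

variable {M : Type*} {P : M → ℝ} {L : ℕ}

theorem wordP_const (P : M → ℝ) (n : M) : wordP P (Function.const (Fin L) n) = P n ^ L := by
  simp [wordP]

theorem wordP_nonneg (hP : ∀ x, 0 ≤ P x) (m : Fin L → M) : 0 ≤ wordP P m :=
  Finset.prod_nonneg fun l _ => hP (m l)

theorem wordP_le_pow {R : ℝ} (hP : ∀ x, 0 ≤ P x) (hR : ∀ x, P x ≤ R) (m : Fin L → M) :
    wordP P m ≤ R ^ L := by
  simpa [wordP] using Finset.prod_le_prod (s := Finset.univ) (fun l _ => hP (m l))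
    fun l _ => hR (m l)

end Word

section KeyCount

variable {M : Type*} (K : Subgroup (Equiv.Perm M)) {L : ℕ}

theorem keyCount_eq_keyCount_self {m c : Fin L → M} (h : keyCount K m c ≠ 0) :
    keyCount K m c = keyCount K m m := by
  obtain ⟨⟨g, hgK, hg⟩⟩ := (Nat.card_ne_zero.mp h).1
  refine Nat.card_congr ((Equiv.mulLeft g⁻¹).subtypeEquiv fun k => ?_)
  simp only [Equiv.coe_mulLeft, K.mul_mem_cancel_left (K.inv_mem hgK), Equiv.Perm.mul_apply,
    Equiv.Perm.inv_eq_iff_eq, hg]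

theorem sum_keyCount [Fintype M] (m : Fin L → M) :
    ∑ c : Fin L → M, keyCount K m c = Nat.card K := by
  have hfiber (c : Fin L → M) :
      keyCount K m c = Nat.card {k : K // (fun l => k.1 (m l)) = c} :=
    Nat.card_congr <| (Equiv.subtypeSubtypeEquivSubtypeInter (· ∈ K) _).symm.trans <|
      Equiv.subtypeEquivRight fun _ => funext_iff.symm
  simp only [hfiber]
  rw [← Nat.card_sigma, Nat.card_congr (Equiv.sigmaFiberEquiv _)]

variable [Finite M]

theorem keyCount_le_card (m c : Fin L → M) : keyCount K m c ≤ Nat.card K :=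
  Nat.card_le_card_of_injective (fun k => (⟨k.1, k.2.1⟩ : K)) fun _ _ h =>
    Subtype.ext (Subtype.mk.inj h)

variable {K}

theorem one_lt_keyCount_self_iff {m : Fin L → M} :
    1 < keyCount K m m ↔ hasNontrivialStab K m := by
  rw [keyCount, Finite.one_lt_card_iff_nontrivial,
    nontrivial_iff_exists_ne ⟨1, K.one_mem, fun _ => rfl⟩]
  simp [hasNontrivialStab, and_comm, and_left_comm]

theorem log_keyCount_self_of_not_hasNontrivialStab {m : Fin L → M}
    (h : ¬hasNontrivialStab K m) : Real.log (keyCount K m m) = 0 := by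
  have hle : keyCount K m m ≤ 1 := not_lt.mp (one_lt_keyCount_self_iff.not.mpr h)
  interval_cases keyCount K m m <;> simp

end KeyCount

section Equivocation

variable {M : Type*} [Fintype M] {K : Subgroup (Equiv.Perm M)} {P : M → ℝ} {L : ℕ}

theorem kae_eq_sum_wordP_mul_log_keyCount_self (K : Subgroup (Equiv.Perm M)) (P : M → ℝ) (L : ℕ) :
    kae K P L = ∑ m : Fin L → M, wordP P m * Real.log (keyCount K m m) := by
  refine Finset.sum_congr rfl fun m _ => ?_
  have hK : (Nat.card K : ℝ) ≠ 0 := Nat.cast_ne_zero.mpr Nat.card_pos.ne'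
  have hsum : ∑ c : Fin L → M, (keyCount K m c : ℝ) = Nat.card K := mod_cast sum_keyCount K m
  have hterm (c : Fin L → M) :
      wordP P m * keyCount K m c / Nat.card K * Real.log (keyCount K m c) =
        keyCount K m c * (wordP P m * Real.log (keyCount K m m) / Nat.card K) := by
    by_cases h : keyCount K m c = 0
    · simp [h]
    · rw [keyCount_eq_keyCount_self K h]
      ring
  simp only [hterm]
  rw [← Finset.sum_mul, hsum, mul_div_cancel₀ _ hK]

theorem log_two_mul_probNontrivial_le_kae (hP : ∀ x, 0 ≤ P x) :
    Real.log 2 * probNontrivial K P L ≤ kae K P L := by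
  rw [kae_eq_sum_wordP_mul_log_keyCount_self, probNontrivial, Finset.mul_sum]
  refine Finset.sum_le_sum fun m _ => ?_
  split_ifs with h
  · have htwo : (2 : ℝ) ≤ keyCount K m m := mod_cast one_lt_keyCount_self_iff.mpr h
    rw [mul_comm]
    exact mul_le_mul_of_nonneg_left (Real.log_le_log two_pos htwo) (wordP_nonneg hP m)
  · simp [log_keyCount_self_of_not_hasNontrivialStab h]

theorem kae_le_log_card_mul_probNontrivial (hP : ∀ x, 0 ≤ P x) :
    kae K P L ≤ Real.log (Nat.card K) * probNontrivial K P L := by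
  rw [kae_eq_sum_wordP_mul_log_keyCount_self, probNontrivial, Finset.mul_sum]
  refine Finset.sum_le_sum fun m _ => ?_
  split_ifs with h
  · have hpos : (0 : ℝ) < keyCount K m m :=
      mod_cast zero_lt_one.trans (one_lt_keyCount_self_iff.mpr h)
    have hle : (keyCount K m m : ℝ) ≤ Nat.card K := mod_cast keyCount_le_card K m m
    rw [mul_comm (Real.log _)]
    exact mul_le_mul_of_nonneg_left (Real.log_le_log hpos hle) (wordP_nonneg hP m)
  · simp [log_keyCount_self_of_not_hasNontrivialStab h]

theorem wordP_le_probNontrivial (hP : ∀ x, 0 ≤ P x) {m : Fin L → M}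
    (hm : hasNontrivialStab K m) : wordP P m ≤ probNontrivial K P L := by
  rw [probNontrivial, ← Finset.sum_filter]
  exact Finset.single_le_sum (fun m' _ => wordP_nonneg hP m') (by simpa using hm)

end Equivocation

section AtMostOneFixedPoint

variable {M : Type*} {K : Subgroup (Equiv.Perm M)} {L : ℕ}

theorem exists_eq_const_of_hasNontrivialStab
    (hfix : ∀ k ∈ K, k ≠ 1 → (Function.fixedPoints k).Subsingleton)
    {m : Fin L → M} (hm : hasNontrivialStab K m) : ∃ n, Function.const (Fin L) n = m := by
  obtain ⟨k, hkK, hk, hkm⟩ := hm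
  rcases isEmpty_or_nonempty (Fin L) with _ | ⟨⟨l⟩⟩
  · obtain ⟨n, -⟩ : ∃ n, k n ≠ n := not_forall.mp fun h => hk (Equiv.ext h)
    exact ⟨n, Subsingleton.elim _ _⟩
  · exact ⟨m l, funext fun l' => hfix k hkK hk (hkm l) (hkm l')⟩

theorem probNontrivial_le_card_mul_pow [Fintype M] [Nonempty M] {P : M → ℝ} {R : ℝ}
    (hfix : ∀ k ∈ K, k ≠ 1 → (Function.fixedPoints k).Subsingleton)
    (hP : ∀ x, 0 ≤ P x) (hR : ∀ x, P x ≤ R) :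
    probNontrivial K P L ≤ Fintype.card M * R ^ L := by
  have hR₀ : 0 ≤ R := (hP (Classical.arbitrary M)).trans (hR _)
  have hcard : (Finset.univ.filter fun m : Fin L → M => hasNontrivialStab K m).card ≤
      Fintype.card M :=
    Finset.card_le_card_of_surjOn (Function.const (Fin L)) fun m hm => by
      simpa using exists_eq_const_of_hasNontrivialStab hfix (by simpa using hm)
  calc probNontrivial K P L
      = ∑ m : Fin L → M with hasNontrivialStab K m, wordP P m := (Finset.sum_filter _ _).symm
    _ ≤ (Finset.univ.filter fun m : Fin L → M => hasNontrivialStab K m).card • R ^ L :=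
        Finset.sum_le_card_nsmul _ _ _ fun m _ => wordP_le_pow hP hR m
    _ ≤ Fintype.card M * R ^ L := by
        rw [nsmul_eq_mul]
        gcongr

theorem card_subgroup_le_card_mul_card_sub_one [Fintype M] [Nontrivial M]
    (hfix : ∀ k ∈ K, k ≠ 1 → (Function.fixedPoints k).Subsingleton) :
    Nat.card K ≤ Fintype.card M * (Fintype.card M - 1) := by
  obtain ⟨x, y, hxy⟩ := exists_pair_ne M
  let images (k : K) : (Finset.univ : Finset M).offDiag := ⟨(k.1 x, k.1 y), by simpa using hxy⟩
  have himages : Function.Injective images := by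
    intro k k' h
    simp only [images, Subtype.mk.injEq, Prod.mk.injEq] at h
    by_contra hne
    have hquot : k'.1⁻¹ * k.1 ≠ 1 := fun h1 => hne (Subtype.ext (inv_mul_eq_one.mp h1).symm)
    refine hxy (hfix _ (K.mul_mem (K.inv_mem k'.2) k.2) hquot ?_ ?_) <;>
      simp [Function.mem_fixedPoints, Function.IsFixedPt, h]
  calc Nat.card K ≤ Nat.card (Finset.univ : Finset M).offDiag :=
        Nat.card_le_card_of_injective images himages
    _ = Fintype.card M * (Fintype.card M - 1) := by
        rw [Nat.card_eq_fintype_card, Fintype.card_coe, Finset.offDiag_card, Finset.card_univ,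
          Nat.mul_sub_one]

end AtMostOneFixedPoint

theorem three_le_card_of_perm_ne_one_of_apply_eq {M : Type*} [Fintype M] {k : Equiv.Perm M}
    (hk : k ≠ 1) {n : M} (hn : k n = n) : 3 ≤ Fintype.card M := by
  have hlt : k.support.card < Fintype.card M :=
    Finset.card_lt_univ_of_notMem (Equiv.Perm.notMem_support.mpr hn)
  have htwo : 2 ≤ k.support.card := Equiv.Perm.two_le_card_support_of_ne_one hk
  lia

theorem kae_bounds_affine_cipher_general {M : Type*} [Fintype M] (K : Subgroup (Equiv.Perm M))
    (hfix : ∀ k ∈ K, k ≠ 1 → (Function.fixedPoints k).Subsingleton)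
    (hstab : ∀ n, ∃ k ∈ K, k ≠ 1 ∧ k n = n)
    (P : M → ℝ) (hP : ∀ x, 0 ≤ P x)
    (R : ℝ) (hR : IsGreatest {x : ℝ | ∃ n : M, P n = x} R) (L : ℕ) :
    Real.log 2 * R ^ L ≤ kae K P L ∧
      kae K P L ≤ Real.log (Fintype.card M * (Fintype.card M - 1) : ℕ) *
        (Fintype.card M * (Fintype.card M - 2) : ℕ) * R ^ L := by
  obtain ⟨⟨n, rfl⟩, hmax⟩ := hR
  obtain ⟨k, hkK, hk, hkn⟩ := hstab n
  have hcard : 3 ≤ Fintype.card M := three_le_card_of_perm_ne_one_of_apply_eq hk hkn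
  have : Nontrivial M := Fintype.one_lt_card_iff_nontrivial.mp (by lia)
  have hlower : P n ^ L ≤ probNontrivial K P L :=
    wordP_const (L := L) P n ▸ wordP_le_probNontrivial hP ⟨k, hkK, hk, fun _ => hkn⟩
  have hupper : probNontrivial K P L ≤ Fintype.card M * P n ^ L :=
    probNontrivial_le_card_mul_pow hfix hP fun x => hmax ⟨x, rfl⟩
  have hpow : 0 ≤ P n ^ L := pow_nonneg (hP n) L
  have hkeys : Nat.card K ≤ Fintype.card M * (Fintype.card M - 1) :=
    card_subgroup_le_card_mul_card_sub_one hfix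
  have hletters : Fintype.card M ≤ Fintype.card M * (Fintype.card M - 2) :=
    Nat.le_mul_of_pos_right _ (by lia)
  constructor
  · calc Real.log 2 * P n ^ L ≤ Real.log 2 * probNontrivial K P L := by gcongr
      _ ≤ kae K P L := log_two_mul_probNontrivial_le_kae hP
  · calc kae K P L ≤ Real.log (Nat.card K) * probNontrivial K P L :=
          kae_le_log_card_mul_probNontrivial hP
      _ ≤ Real.log (Nat.card K) * (Fintype.card M * P n ^ L) := by gcongr
      _ = Real.log (Nat.card K) * Fintype.card M * P n ^ L := (mul_assoc _ _ _).symm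
      _ ≤ Real.log (Fintype.card M * (Fintype.card M - 1) : ℕ) *
          (Fintype.card M * (Fintype.card M - 2) : ℕ) * P n ^ L := by
        gcongr
        exact_mod_cast Nat.card_pos

section Affine

theorem fixedPoints_subsingleton_of_affine {A : Type*} [Ring A] [NoZeroDivisors A]
    {σ : Equiv.Perm A} {a b : A} (hσ : ∀ x, σ x = a * x + b) (hne : σ ≠ 1) :
    (Function.fixedPoints σ).Subsingleton := by
  intro x hx y hy
  by_contra hxy
  replace hx : a * x + b = x := (hσ x).symm.trans hx
  replace hy : a * y + b = y := (hσ y).symm.trans hy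
  have hmul : (a - 1) * (x - y) = 0 := calc
    (a - 1) * (x - y) = (a * x + b - x) - (a * y + b - y) := by noncomm_ring
    _ = 0 := by simp [hx, hy]
  have ha : a = 1 := sub_eq_zero.mp ((mul_eq_zero.mp hmul).resolve_right (sub_ne_zero.mpr hxy))
  have hb : b = 0 := by simpa [ha] using hx
  exact hne (Equiv.ext fun z => by simp [hσ, ha, hb])

theorem exists_affine_perm_ne_one_apply_eq {A : Type*} [CommRing A] [Nontrivial Aˣ] (n : A) :
    ∃ σ : Equiv.Perm A, (∃ (u : Aˣ) (b : A), ∀ x, σ x = u * x + b) ∧ σ ≠ 1 ∧ σ n = n := by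
  obtain ⟨u, hu⟩ := exists_ne (1 : Aˣ)
  let σ : Equiv.Perm A := (AffineEquiv.homothetyUnitsMulHom n u).toEquiv
  have hσ (x : A) : σ x = u * (x - n) + n := by
    simp [σ, AffineMap.homothety_apply]
  refine ⟨σ, ⟨u, n - u * n, fun x => by rw [hσ]; ring⟩, fun h => hu (Units.ext ?_), by simp [hσ]⟩
  simpa [hσ, add_comm] using Equiv.congr_fun h (n + 1)

end Affine

/-- Affine cipher, equivocation bounds:
`log 2 · R₄^L ≤ H(K | M^L C^L) ≤ log(N(N-1)) · N(N-2) · R₄^L` with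
`R₄ = max{P_M(n) : n ∈ F}`. -/
theorem kae_bounds_affine_cipher {F : Type*} [Field F] [Fintype F] [DecidableEq F]
    (hN : 3 ≤ Fintype.card F) (K : Subgroup (Equiv.Perm F))
    (hK : ∀ σ : Equiv.Perm F, σ ∈ K ↔ ∃ a b : F, a ≠ 0 ∧ ∀ x, σ x = a * x + b)
    (P : F → ℝ) (hP : ∀ x, 0 ≤ P x) (hsum : ∑ x, P x = 1)
    (R : ℝ) (hR : IsGreatest {x : ℝ | ∃ n : F, P n = x} R) (L : ℕ) :
    Real.log 2 * R ^ L ≤ kae K P L ∧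
      kae K P L ≤ Real.log (Fintype.card F * (Fintype.card F - 1) : ℕ) *
        (Fintype.card F * (Fintype.card F - 2) : ℕ) * R ^ L := by
  have : Nontrivial Fˣ := Fintype.one_lt_card_iff_nontrivial.mp (by rw [Fintype.card_units]; lia)
  refine kae_bounds_affine_cipher_general K (fun k hk => ?_) (fun n => ?_) P hP R hR L
  · obtain ⟨a, b, -, hab⟩ := (hK k).mp hk
    exact fixedPoints_subsingleton_of_affine hab
  · obtain ⟨σ, ⟨u, b, hσ⟩, hne, hn⟩ := exists_affine_perm_ne_one_apply_eq n
    exact ⟨σ, (hK σ).mpr ⟨u, b, u.ne_zero, hσ⟩, hne, hn⟩
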